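/- Let T be a triangulated category, K a thick subcategory, and F : T → T/K the Verdier quotient functor. Then the map Q ↦ F^{-1}(Q) is an order isomorphism from the lattice of thick subcategories of T/K onto the lattice of thick subcategories of T containing K. Moreover, under this bijection, Q is a prime thick subcategory of T/K if and only if F^{-1}(Q) is a prime thick subcategory of T. -/

import Mathlib

open CategoryTheory Limits Pretriangulated

universe v u

variable (C : Type u) [Category.{v} C] [Preadditive C] [HasZeroObject C]
  [HasShift C ℤ] [∀ n : ℤ, (shiftFunctor C n).Additive] [Pretriangulated C]

/-- A thick subcategory of a (pre)triangulated category, modelled as a set of objects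
closed under isomorphisms, zero objects, shifts, extensions and direct summands. -/
structure ThickSubcat : Type (max u v) where
  set : Set C
  mem_of_iso : ∀ {X Y : C}, (X ≅ Y) → X ∈ set → Y ∈ set
  zero_mem : ∀ Z : C, IsZero Z → Z ∈ set
  shift_mem : ∀ (X : C) (n : ℤ), X ∈ set → X⟦n⟧ ∈ set
  ext_mem : ∀ T : Triangle C, T ∈ (distTriang C) → T.obj₁ ∈ set → T.obj₃ ∈ set → T.obj₂ ∈ set
  summand_mem : ∀ (X Y : C) (i : Y ⟶ X) (r : X ⟶ Y), i ≫ r = 𝟙 Y → X ∈ set → Y ∈ set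

lemma ThickSubcat.set_injective : Function.Injective (ThickSubcat.set (C := C)) := by
  rintro ⟨s, _, _, _, _, _⟩ ⟨t, _, _, _, _, _⟩ h
  cases h; rfl

instance : PartialOrder (ThickSubcat C) :=
  PartialOrder.lift ThickSubcat.set (ThickSubcat.set_injective C)

/-- A thick subcategory `P` is *prime* if there is a unique minimal element among the
thick subcategories properly containing `P`. -/
def IsPrimeThick (P : ThickSubcat C) : Prop :=
  ∃! X : ThickSubcat C, Minimal (fun Y : ThickSubcat C => P < Y) X

/-- The spectrum: the set of prime thick subcategories. -/
def SpecTri := {P : ThickSubcat C // IsPrimeThick C P}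

/-- The support of an object `M`. -/
def suppObj (M : C) : Set (SpecTri C) := {P | M ∉ P.1.set}

/-- The topology on the spectrum, with closed basis the supports `suppObj M`. -/
instance : TopologicalSpace (SpecTri C) :=
  TopologicalSpace.generateFrom {U | ∃ M : C, U = (suppObj C M)ᶜ}

/-- The class of morphisms of `C` whose cone lies in the thick subcategory `K`. -/
def coneInK (K : ThickSubcat C) : MorphismProperty C :=
  fun X Y f => ∃ (Z : C) (g : Y ⟶ Z) (h : Z ⟶ X⟦(1 : ℤ)⟧),
    Triangle.mk f g h ∈ (distTriang C) ∧ Z ∈ K.set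

/-!
The quotient functor `F` kills exactly the morphisms that factor through an object of `K`, so it
kills exactly the objects of `K` and inverts exactly the morphisms with cone in `K`. Hence a thick
`X ⊇ K` is determined by the isomorphism classes of the `F A` with `A` in `X`: an isomorphism
`F A ≅ F B` is a fraction of two morphisms with cone in `K`. As triangles and direct sum
decompositions of `T/K` lift to `T`, the isomorphism closure of `F X` is thick, and this inverts
`Q ↦ F⁻¹(Q)`. Primeness of `Q` only involves thick subcategories above `Q`, and the
image of `Q ↦ F⁻¹(Q)` is an upper set.

The category is only pretriangulated, and the octahedral axiom is the usual reason why morphisms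
with cone in `K` compose. Here closure of `K` under direct summands replaces it: the identity of
the cone of a composite is shown to factor through an object of `K`.
-/

section Order

variable {α β : Type*} [PartialOrder α] [PartialOrder β] (f : α ↪o β)

lemma minimal_apply_lt_apply_iff_of_isUpperSet_range (hf : IsUpperSet (Set.range f)) (a x : α) :
    Minimal (f a < ·) (f x) ↔ Minimal (a < ·) x := by
  have hrange : Set.Ioi (f a) ⊆ Set.range f := fun _ hy => hf (le_of_lt hy) ⟨a, rfl⟩
  simpa only [Set.mem_Ioi, f.lt_iff_lt] using f.minimal_apply_mem_iff hrange

lemma existsUnique_minimal_apply_lt_iff_of_isUpperSet_range (hf : IsUpperSet (Set.range f))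
    (a : α) : (∃! y, Minimal (f a < ·) y) ↔ ∃! x, Minimal (a < ·) x := by
  have minimal_iff := minimal_apply_lt_apply_iff_of_isUpperSet_range f hf a
  constructor
  · rintro ⟨y, hy, unique⟩
    obtain ⟨x, rfl⟩ := hf hy.prop.le ⟨a, rfl⟩
    exact ⟨x, (minimal_iff x).1 hy, fun x' hx' => f.injective (unique _ ((minimal_iff x').2 hx'))⟩
  · rintro ⟨x, hx, unique⟩
    refine ⟨f x, (minimal_iff x).2 hx, fun y hy => ?_⟩
    obtain ⟨x', rfl⟩ := hf hy.prop.le ⟨a, rfl⟩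
    rw [unique x' ((minimal_iff x').1 hy)]

end Order

section FactorsThrough

variable {A : Type*} [Category* A]

/-- The morphisms that factor through an object satisfying `P`. When `P` is a thick subcategory,
these are the morphisms that vanish in the Verdier quotient by `P`. -/
def factorsThrough (P : ObjectProperty A) : MorphismProperty A :=
  fun X Y f => ∃ (Z : A) (a : X ⟶ Z) (b : Z ⟶ Y), P Z ∧ a ≫ b = f

lemma factorsThrough_id_iff (P : ObjectProperty A) [P.IsStableUnderRetracts] (X : A) :
    factorsThrough P (𝟙 X) ↔ P X :=
  ⟨fun ⟨_, a, b, hZ, fac⟩ => P.prop_of_retract ⟨a, b, fac⟩ hZ,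
    fun hX => ⟨X, 𝟙 X, 𝟙 X, hX, Category.comp_id _⟩⟩

lemma factorsThrough_zero [HasZeroMorphisms A] (P : ObjectProperty A) [P.Nonempty] (X Y : A) :
    factorsThrough P (0 : X ⟶ Y) :=
  ⟨P.arbitrary, 0, 0, P.prop_arbitrary, zero_comp⟩

instance inverseImage_isStableUnderRetracts {B : Type*} [Category* B] (P : ObjectProperty B)
    [P.IsStableUnderRetracts] (F : A ⥤ B) : (P.inverseImage F).IsStableUnderRetracts where
  of_retract r hY := P.prop_of_retract (r.map F) hY

end FactorsThrough

variable {C}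

section Triangles

lemma exists_distTriang_cobaseChange {X Y Z X' : C} {f : X ⟶ Y} {g : Y ⟶ Z} {h : Z ⟶ X⟦(1 : ℤ)⟧}
    (hT : Triangle.mk f g h ∈ distTriang C) (a : X ⟶ X') :
    ∃ (Y' : C) (f' : X' ⟶ Y') (g' : Y' ⟶ Z) (b : Y ⟶ Y'),
      Triangle.mk f' g' (h ≫ a⟦(1 : ℤ)⟧') ∈ distTriang C ∧ f ≫ b = a ≫ f' := by
  obtain ⟨Y', f', g', hT'⟩ := distinguished_cocone_triangle₂ (h ≫ a⟦(1 : ℤ)⟧')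
  obtain ⟨b, hb, -⟩ := complete_distinguished_triangle_morphism₂ _ _ hT hT' a (𝟙 Z)
    (Category.id_comp _).symm
  exact ⟨Y', f', g', b, hT', hb⟩

lemma exists_mor₁_comp_eq (T : Triangle C) (hT : T ∈ distTriang C) {B : C} (v : T.obj₁ ⟶ B)
    (hv : T.mor₃ ≫ v⟦(1 : ℤ)⟧' = 0) : ∃ w : T.obj₂ ⟶ B, T.mor₁ ≫ w = v := by
  obtain ⟨w, hw, -⟩ := complete_distinguished_triangle_morphism₂ _ _ hT
    (contractible_distinguished B) v 0 (hv.trans zero_comp.symm)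
  exact ⟨w, hw.trans (Category.comp_id v)⟩

lemma exists_iso_biprod_of_retract {X Y : C} (r : Retract X Y) :
    ∃ Z : C, Nonempty (Y ≅ X ⊞ Z) := by
  obtain ⟨Z, p, q, hT⟩ := distinguished_cocone_triangle r.i
  have hq : q = 0 := Triangle.mor₃_eq_zero_of_mono₁ _ hT (inferInstanceAs (Mono r.i))
  obtain ⟨e, -⟩ := exists_iso_binaryBiproduct_of_distTriang _ hT hq
  exact ⟨Z, ⟨e⟩⟩

end Triangles

section Cones

variable (P : ObjectProperty C)

lemma factorsThrough_add [P.IsTriangulatedClosed₂] [P.IsClosedUnderIsomorphisms] {X Y : C}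
    {f g : X ⟶ Y} (hf : factorsThrough P f) (hg : factorsThrough P g) :
    factorsThrough P (f + g) := by
  obtain ⟨Z, a, b, hZ, rfl⟩ := hf
  obtain ⟨Z', a', b', hZ', rfl⟩ := hg
  exact ⟨Z ⊞ Z', biprod.lift a a', biprod.desc b b',
    P.ext_of_isTriangulatedClosed₂ _ (binaryBiproductTriangle_distinguished Z Z') hZ hZ',
    biprod.lift_desc⟩

lemma factorsThrough_iff_exists_trW_comp_eq_zero [P.IsStableUnderShift ℤ] {X Y : C} (f : X ⟶ Y) :
    factorsThrough P f ↔ ∃ (Y' : C) (s : Y ⟶ Y'), P.trW s ∧ f ≫ s = 0 := by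
  constructor
  · rintro ⟨Z, a, b, hZ, rfl⟩
    obtain ⟨Y', s, d, hT⟩ := distinguished_cocone_triangle b
    have hbs : b ≫ s = 0 := comp_distTriang_mor_zero₁₂ _ hT
    exact ⟨Y', s, .mk' P hT hZ, by rw [Category.assoc, hbs, comp_zero]⟩
  · rintro ⟨Y', s, hs, hfs⟩
    obtain ⟨Z, b, d, hT, hZ⟩ := (P.trW_iff' s).1 hs
    obtain ⟨a, ha⟩ : ∃ a : X ⟶ Z, f = a ≫ b := Triangle.coyoneda_exact₂ _ hT f hfs
    exact ⟨Z, a, b, hZ, ha.symm⟩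

lemma factorsThrough_of_trW_comp [P.IsTriangulatedClosed₂] [P.IsClosedUnderIsomorphisms]
    {X' X Y : C} {s : X' ⟶ X} (hs : P.trW s) (f : X ⟶ Y) (hsf : factorsThrough P (s ≫ f)) :
    factorsThrough P f := by
  obtain ⟨Z, p, d, hT, hZ⟩ := hs
  obtain ⟨V, a, v, hV, hav⟩ := hsf
  have hds : d ≫ s⟦(1 : ℤ)⟧' = 0 := comp_distTriang_mor_zero₃₁ _ hT
  obtain ⟨E, i, q, b, hT', hsb⟩ := exists_distTriang_cobaseChange hT a
  have hE : P E := P.ext_of_isTriangulatedClosed₂ _ hT' hV hZ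
  obtain ⟨w, hw⟩ : ∃ w : E ⟶ Y, i ≫ w = v := by
    refine exists_mor₁_comp_eq _ hT' v (?_ : (d ≫ a⟦(1 : ℤ)⟧') ≫ v⟦(1 : ℤ)⟧' = 0)
    rw [Category.assoc, ← Functor.map_comp, hav, Functor.map_comp, reassoc_of% hds, zero_comp]
  have hs_sub : s ≫ (f - b ≫ w) = 0 := by
    rw [Preadditive.comp_sub, ← hav, reassoc_of% hsb, hw, sub_self]
  obtain ⟨u, hu⟩ : ∃ u : Z ⟶ Y, f - b ≫ w = p ≫ u := Triangle.yoneda_exact₂ _ hT _ hs_sub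
  rw [← sub_add_cancel f (b ≫ w)]
  exact factorsThrough_add P ⟨Z, p, u, hZ, hu.symm⟩ ⟨E, b, w, hE, rfl⟩

lemma trW_comp_of_isStableUnderRetracts [P.IsTriangulatedClosed₂] [P.IsStableUnderRetracts]
    {X Y Z : C} {f : X ⟶ Y} {g : Y ⟶ Z} (hf : P.trW f) (hg : P.trW g) : P.trW (f ≫ g) := by
  obtain ⟨Kf, pf, qf, hTf, hKf⟩ := hf
  obtain ⟨Kg, pg, qg, hTg, hKg⟩ := id hg
  obtain ⟨K, p, q, hT⟩ := distinguished_cocone_triangle (f ≫ g)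
  obtain ⟨a, hpa, hqa⟩ : ∃ a : Kf ⟶ K, pf ≫ a = g ≫ p ∧ qf ≫ (𝟙 X)⟦(1 : ℤ)⟧' = a ≫ q :=
    complete_distinguished_triangle_morphism _ _ hTf hT (𝟙 X) g (Category.id_comp _).symm
  obtain ⟨b, -, hqb⟩ : ∃ b : K ⟶ Kg, p ≫ b = 𝟙 Z ≫ pg ∧ q ≫ f⟦(1 : ℤ)⟧' = b ≫ qg :=
    complete_distinguished_triangle_morphism _ _ hT hTg f (𝟙 Z) (Category.comp_id _)
  rw [CategoryTheory.Functor.map_id, Category.comp_id] at hqa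
  have hp : factorsThrough P p :=
    factorsThrough_of_trW_comp P hg p ⟨Kf, pf, a, hKf, hpa⟩
  obtain ⟨L, t, d, hTb⟩ := distinguished_cocone_triangle₁ b
  have htb : t ≫ b = 0 := comp_distTriang_mor_zero₁₂ _ hTb
  obtain ⟨s, hs⟩ : ∃ s : L ⟶ Kf, t ≫ q = s ≫ qf :=
    Triangle.coyoneda_exact₁ _ hTf (t ≫ q)
      (show (t ≫ q) ≫ f⟦(1 : ℤ)⟧' = 0 by rw [Category.assoc, hqb, reassoc_of% htb, zero_comp])
  obtain ⟨r, hr⟩ : ∃ r : L ⟶ Z, t - s ≫ a = r ≫ p :=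
    Triangle.coyoneda_exact₃ _ hT (t - s ≫ a)
      (show (t - s ≫ a) ≫ q = 0 by
        rw [Preadditive.sub_comp, hs, Category.assoc, ← hqa, sub_self])
  have ht : factorsThrough P t := by
    obtain ⟨V, c, e, hV, rfl⟩ := hp
    rw [← sub_add_cancel t (s ≫ a), hr]
    exact factorsThrough_add P ⟨V, r ≫ c, e, hV, Category.assoc _ _ _⟩ ⟨Kf, s, a, hKf, rfl⟩
  refine ⟨K, p, q, hT, (factorsThrough_id_iff P K).1 ?_⟩
  have ht_trW : P.trW t := .mk P hTb hKg
  exact factorsThrough_of_trW_comp P ht_trW (𝟙 K) (by rwa [Category.comp_id])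

lemma prop_iff_of_trW [P.IsTriangulated] [P.IsClosedUnderIsomorphisms] {X Y : C} {f : X ⟶ Y}
    (hf : P.trW f) : P X ↔ P Y := by
  obtain ⟨Z, g, h, hT, hZ⟩ := hf
  exact ⟨fun hX => P.ext_of_isTriangulatedClosed₂ _ hT hX hZ,
    fun hY => P.ext_of_isTriangulatedClosed₁ _ hT hY hZ⟩

variable [P.IsTriangulated] [P.IsStableUnderRetracts]

instance trW_isMultiplicative_of_isStableUnderRetracts : P.trW.IsMultiplicative where
  comp_mem _ _ := trW_comp_of_isStableUnderRetracts P

instance trW_hasLeftCalculusOfFractions_of_isStableUnderRetracts :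
    P.trW.HasLeftCalculusOfFractions where
  exists_leftFraction _ _ φ := by
    obtain ⟨Z, g, h, hT, hZ⟩ := φ.hs
    obtain ⟨Y', s', _, f', hT', comm⟩ := exists_distTriang_cobaseChange hT φ.f
    exact ⟨.mk f' s' (.mk P hT' hZ), comm.symm⟩
  ext _ _ _ f₁ f₂ s hs hf := by
    have hsub : factorsThrough P (f₁ - f₂) := by
      refine factorsThrough_of_trW_comp P hs _ ?_
      rw [Preadditive.comp_sub, hf, sub_self]
      exact factorsThrough_zero P _ _
    obtain ⟨Y', t, ht, hsub_t⟩ := (factorsThrough_iff_exists_trW_comp_eq_zero P _).1 hsub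
    exact ⟨Y', t, ht, by rwa [Preadditive.sub_comp, sub_eq_zero] at hsub_t⟩

end Cones

section VerdierQuotient

open scoped ZeroObject

variable {D : Type*} [Category* D] [Preadditive D] [HasZeroObject D] [HasShift D ℤ]
  [∀ n : ℤ, (shiftFunctor D n).Additive] [Pretriangulated D]
  (P Q : ObjectProperty C) [P.IsTriangulated] [P.IsStableUnderRetracts]
  (F : C ⥤ D) [F.CommShift ℤ] [F.IsTriangulated] [F.IsLocalization P.trW]

lemma map_eq_zero_iff_factorsThrough {X Y : C} (f : X ⟶ Y) :
    F.map f = 0 ↔ factorsThrough P f := by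
  rw [← F.map_zero, MorphismProperty.map_eq_iff_postcomp F P.trW,
    factorsThrough_iff_exists_trW_comp_eq_zero]
  simp only [zero_comp, exists_prop]

lemma isZero_obj_iff_prop (X : C) : IsZero (F.obj X) ↔ P X := by
  rw [IsZero.iff_id_eq_zero, ← F.map_id, map_eq_zero_iff_factorsThrough P, factorsThrough_id_iff]

lemma isIso_map_iff_trW {X Y : C} (f : X ⟶ Y) : IsIso (F.map f) ↔ P.trW f := by
  obtain ⟨Z, g, h, hT⟩ := distinguished_cocone_triangle f
  calc IsIso (F.map f) ↔ IsZero (F.obj Z) :=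
        (Triangle.isZero₃_iff_isIso₁ _ (F.map_distinguished _ hT)).symm
    _ ↔ P Z := isZero_obj_iff_prop P F Z
    _ ↔ P.trW f := (P.trW_iff_of_distinguished _ hT).symm

variable {P Q} [Q.IsTriangulated]

lemma prop_of_iso_obj [Q.IsClosedUnderIsomorphisms] (hPQ : P ≤ Q) {X Y : C}
    (e : F.obj X ≅ F.obj Y) (hX : Q X) : Q Y := by
  obtain ⟨φ, hφ⟩ := Localization.exists_leftFraction F P.trW e.hom
  have hf : P.trW φ.f := by
    have inverts := Localization.inverts F P.trW
    have := inverts φ.s φ.hs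
    rw [← isIso_map_iff_trW P F, ← φ.map_comp_map_s F inverts, ← hφ]
    infer_instance
  have trW_le := ObjectProperty.trW_monotone hPQ
  exact (prop_iff_of_trW Q (trW_le _ φ.hs)).2 ((prop_iff_of_trW Q (trW_le _ hf)).1 hX)

lemma map_isTriangulated_of_le [Q.IsClosedUnderIsomorphisms] (hPQ : P ≤ Q) :
    (Q.map F).IsTriangulated where
  exists_zero := ⟨0, isZero_zero D, 0, Q.prop_zero, ⟨F.mapZeroObject⟩⟩
  isStableUnderShiftBy n :=
    { le_shift := by
        rintro A ⟨X, hX, ⟨e⟩⟩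
        exact ⟨X⟦n⟧, Q.le_shift n X hX,
          ⟨(F.commShiftIso n).app X ≪≫ (shiftFunctor D n).mapIso e⟩⟩ }
  toIsTriangulatedClosed₂ := .mk' (by
    rintro T hT ⟨X₁, hX₁, ⟨e₁⟩⟩ ⟨X₃, hX₃, ⟨e₃⟩⟩
    have := Localization.essSurj_mapArrow F P.trW
    obtain ⟨T', hT', ⟨e⟩⟩ := F.mem_mapTriangle_essImage_of_distinguished T hT
    have h₁ : Q T'.obj₁ := prop_of_iso_obj F hPQ (e₁ ≪≫ (Triangle.π₁.mapIso e).symm) hX₁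
    have h₃ : Q T'.obj₃ := prop_of_iso_obj F hPQ (e₃ ≪≫ (Triangle.π₃.mapIso e).symm) hX₃
    exact ⟨T'.obj₂, Q.ext_of_isTriangulatedClosed₂ T' hT' h₁ h₃, ⟨Triangle.π₂.mapIso e⟩⟩)

lemma map_isStableUnderRetracts_of_le [Q.IsStableUnderRetracts] (hPQ : P ≤ Q) :
    (Q.map F).IsStableUnderRetracts where
  of_retract := by
    rintro B A r ⟨X, hX, ⟨e⟩⟩
    have := Localization.essSurj F P.trW
    have := preservesBinaryBiproducts_of_preservesBiproducts F
    obtain ⟨B', ⟨eA⟩⟩ := exists_iso_biprod_of_retract r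
    let eB := F.objObjPreimageIso B
    have hsum : Q (F.objPreimage B ⊞ F.objPreimage B') :=
      prop_of_iso_obj F hPQ (e ≪≫ eA ≪≫ (biprod.mapIso eB (F.objObjPreimageIso B')).symm ≪≫
        (F.mapBiprod _ _).symm) hX
    exact ⟨F.objPreimage B, ObjectProperty.IsStableUnderRetracts.of_biprod_left Q hsum, ⟨eB⟩⟩

lemma inverseImage_map_eq_of_le [Q.IsClosedUnderIsomorphisms] (hPQ : P ≤ Q) :
    (Q.map F).inverseImage F = Q := by
  ext X
  exact ⟨fun ⟨_, hY, ⟨e⟩⟩ => prop_of_iso_obj F hPQ e hY, Q.prop_map_obj F⟩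

end VerdierQuotient

lemma map_inverseImage_eq_of_essSurj {A B : Type*} [Category* A] [Category* B]
    (Q : ObjectProperty B) [Q.IsClosedUnderIsomorphisms] (F : A ⥤ B) [F.EssSurj] :
    (Q.inverseImage F).map F = Q := by
  ext Y
  exact ⟨fun ⟨_, hX, ⟨e⟩⟩ => Q.prop_of_iso e hX, fun hY =>
    ⟨F.objPreimage Y, Q.prop_of_iso (F.objObjPreimageIso Y).symm hY, ⟨F.objObjPreimageIso Y⟩⟩⟩

namespace ThickSubcat

open scoped ZeroObject

/-- The predicate of belonging to a thick subcategory, which gives access to the theory of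
triangulated object properties. -/
def toObjectProperty (K : ThickSubcat C) : ObjectProperty C := fun X => X ∈ K.set

instance (K : ThickSubcat C) : K.toObjectProperty.IsStableUnderRetracts where
  of_retract r hY := K.summand_mem _ _ r.i r.r r.retract hY

instance (K : ThickSubcat C) : K.toObjectProperty.IsTriangulated where
  exists_zero := ⟨0, isZero_zero C, K.zero_mem _ (isZero_zero C)⟩
  isStableUnderShiftBy n := { le_shift := fun X hX => K.shift_mem X n hX }
  toIsTriangulatedClosed₂ := .mk' K.ext_mem

/-- The thick subcategory of the objects satisfying a triangulated, retract-stable property. -/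
def ofObjectProperty (P : ObjectProperty C) [P.IsTriangulated] [P.IsStableUnderRetracts] :
    ThickSubcat C where
  set := {X | P X}
  mem_of_iso := P.prop_of_iso
  zero_mem _ := P.prop_of_isZero
  shift_mem X n := P.le_shift n X
  ext_mem := P.ext_of_isTriangulatedClosed₂
  summand_mem _ _ i r fac := P.prop_of_retract ⟨i, r, fac⟩

lemma ext_toObjectProperty {K L : ThickSubcat C} (h : K.toObjectProperty = L.toObjectProperty) :
    K = L :=
  set_injective C h

lemma coneInK_eq_trW (K : ThickSubcat C) : coneInK C K = K.toObjectProperty.trW := by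
  ext X Y f
  simp only [coneInK, ObjectProperty.trW_iff, toObjectProperty, exists_prop]

variable {D : Type*} [Category* D] [Preadditive D] [HasZeroObject D] [HasShift D ℤ]
  [∀ n : ℤ, (shiftFunctor D n).Additive] [Pretriangulated D]
  (F : C ⥤ D) [F.CommShift ℤ] [F.IsTriangulated]

/-- The preimage `F⁻¹(Q)` of a thick subcategory under a triangulated functor. -/
def comap (Q : ThickSubcat D) : ThickSubcat C :=
  ofObjectProperty (Q.toObjectProperty.inverseImage F)

variable (K : ThickSubcat C) [F.IsLocalization K.toObjectProperty.trW]

lemma le_comap (Q : ThickSubcat D) : K ≤ Q.comap F :=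
  fun X hX => Q.zero_mem _ ((isZero_obj_iff_prop K.toObjectProperty F X).2 hX)

variable {K}

/-- The isomorphism closure of the image, in the Verdier quotient by `K`, of a thick subcategory
containing `K`. -/
def mapOfLE {X : ThickSubcat C} (hX : K ≤ X) : ThickSubcat D :=
  have hKX : K.toObjectProperty ≤ X.toObjectProperty := hX
  have := map_isTriangulated_of_le F hKX
  have := map_isStableUnderRetracts_of_le F hKX
  ofObjectProperty (X.toObjectProperty.map F)

variable (K)

/-- The correspondence between thick subcategories of the Verdier quotient by `K` and thick
subcategories containing `K`, given by taking preimages. -/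
def comapOrderIso : ThickSubcat D ≃o {X : ThickSubcat C // K ≤ X} :=
  Equiv.toOrderIso
    { toFun Q := ⟨Q.comap F, le_comap F K Q⟩
      invFun X := mapOfLE F X.2
      left_inv Q :=
        have := Localization.essSurj F K.toObjectProperty.trW
        ext_toObjectProperty (map_inverseImage_eq_of_essSurj Q.toObjectProperty F)
      right_inv X :=
        have hKX : K.toObjectProperty ≤ X.1.toObjectProperty := X.2
        Subtype.ext (ext_toObjectProperty (inverseImage_map_eq_of_le F hKX)) }
    (fun _ _ hQ _ hA => hQ hA)
    (fun _ _ hX => ObjectProperty.map_monotone hX F)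

lemma isPrimeThick_comapOrderIso_iff (Q : ThickSubcat D) :
    IsPrimeThick C (comapOrderIso F K Q : ThickSubcat C) ↔ IsPrimeThick D Q := by
  let f : ThickSubcat D ↪o ThickSubcat C :=
    (comapOrderIso F K).toOrderEmbedding.trans (OrderEmbedding.subtype _)
  refine existsUnique_minimal_apply_lt_iff_of_isUpperSet_range f ?_ Q
  rintro _ X hX ⟨Q', rfl⟩
  obtain ⟨Q'', hQ''⟩ := (comapOrderIso F K).surjective ⟨X, (le_comap F K Q').trans hX⟩
  exact ⟨Q'', congrArg Subtype.val hQ''⟩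

end ThickSubcat

variable (C)

/-- Let `K` be a thick subcategory of `T` and `F : T → T/K` the Verdier quotient functor
(modelled as a localization at the morphisms with cone in `K`). Then `Q ↦ F⁻¹(Q)` is an
order isomorphism from the lattice of thick subcategories of `T/K` onto the lattice of
thick subcategories of `T` containing `K`; moreover `Q` is prime in `T/K` if and only if
`F⁻¹(Q)` is prime in `T`. -/
theorem stmt9 (D : Type*) [Category D] [Preadditive D] [HasZeroObject D]
    [HasShift D ℤ] [∀ n : ℤ, (shiftFunctor D n).Additive] [Pretriangulated D]
    (K : ThickSubcat C) (F : C ⥤ D) [F.CommShift ℤ] [F.IsTriangulated] [F.Additive]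
    [F.IsLocalization (coneInK C K)] :
    ∃ e : ThickSubcat D ≃o {X : ThickSubcat C // K ≤ X},
      (∀ Q : ThickSubcat D, ((e Q : {X : ThickSubcat C // K ≤ X}) : ThickSubcat C).set
          = F.obj ⁻¹' Q.set) ∧
      (∀ Q : ThickSubcat D, IsPrimeThick D Q ↔ IsPrimeThick C (e Q : ThickSubcat C)) := by
  have : F.IsLocalization K.toObjectProperty.trW := K.coneInK_eq_trW ▸ inferInstance
  exact ⟨ThickSubcat.comapOrderIso F K, fun _ => rfl,
    fun Q => (ThickSubcat.isPrimeThick_comapOrderIso_iff F K Q).symm⟩
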